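/- arXiv:1807.08324 — 7 statements merged into one kernel-verified Lean document; each statement's English description precedes it below -/
import Mathlib

section
/- Let (g, [·,·], α) be a Hom-Lie algebra over a field K with α surjective, and let A and B be ideals of g. Let S = [A,B] be the linear span of all brackets [a,b] with a ∈ A, b ∈ B, and assume α(S) ⊆ S. Then S is an ideal of g; in particular [g, S] ⊆ S. -/
/-- The span of brackets of elements of `A` with elements of `C`. -/
def homLieBracketSpan {K g : Type*} [Field K] [AddCommGroup g] [Module K g]
    (B : g →ₗ[K] g →ₗ[K] g) (A C : Submodule K g) : Submodule K g :=
  Submodule.span K {z | ∃ a ∈ A, ∃ c ∈ C, z = B a c}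

/-!
By skew-symmetry, the Hom-Jacobi identity is a twisted Leibniz rule
`[α x, [a, c]] = [[x, a], α c] + [α a, [x, c]]`. When `a` and `c` lie in ideals `A` and `C`, both
summands lie in `[A, C]`, so `[A, C]` is stable under bracketing with the range of `α`.
-/

theorem homLieBracketSpan_eq_map₂ {K g : Type*} [Field K] [AddCommGroup g] [Module K g]
    (B : g →ₗ[K] g →ₗ[K] g) (A C : Submodule K g) :
    homLieBracketSpan B A C = Submodule.map₂ B A C := by
  simp only [homLieBracketSpan, Submodule.map₂_eq_span_image2, Set.image2, SetLike.mem_coe,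
    eq_comm]

section HomLie

variable {R L : Type*} [CommSemiring R] [AddCommGroup L] [Module R L]
  {B : L →ₗ[R] L →ₗ[R] L} {α : L → L}

theorem homJacobi_leibniz (hskew : ∀ x y, B x y = -B y x)
    (hjac : ∀ x y z, B (α x) (B y z) + B (α y) (B z x) + B (α z) (B x y) = 0) (x y z : L) :
    B (α x) (B y z) = B (B x y) (α z) + B (α y) (B x z) := by
  have h := hjac x y z
  rw [hskew z x, hskew (α z), map_neg] at h
  rw [← sub_eq_zero, ← h]
  abel

theorem bracket_of_ideals_is_ideal_general (hskew : ∀ x y, B x y = -B y x)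
    (hjac : ∀ x y z, B (α x) (B y z) + B (α y) (B z x) + B (α z) (B x y) = 0)
    {A C : Submodule R L}
    (hA : ∀ x : L, ∀ a ∈ A, B x a ∈ A) (hαA : ∀ a ∈ A, α a ∈ A)
    (hC : ∀ x : L, ∀ c ∈ C, B x c ∈ C) (hαC : ∀ c ∈ C, α c ∈ C) :
    ∀ x ∈ Set.range α, ∀ s ∈ Submodule.map₂ B A C, B x s ∈ Submodule.map₂ B A C := by
  rintro _ ⟨x, rfl⟩
  suffices Submodule.map₂ B A C ≤ (Submodule.map₂ B A C).comap (B (α x)) from this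
  refine Submodule.map₂_le.2 fun a ha c hc ↦ ?_
  rw [Submodule.mem_comap, homJacobi_leibniz hskew hjac]
  exact add_mem (Submodule.apply_mem_map₂ B (hA x a ha) (hαC c hc))
    (Submodule.apply_mem_map₂ B (hαA a ha) (hC x c hc))

end HomLie

/-- In a Hom-Lie algebra with surjective structure map, the span `S = [A,B]` of
brackets of two ideals, when stable under `α`, is an ideal. -/
theorem bracket_of_ideals_is_ideal {K g : Type*} [Field K] [AddCommGroup g] [Module K g]
    (B : g →ₗ[K] g →ₗ[K] g) (α : g →ₗ[K] g)
    (hskew : ∀ x y, B x y = - B y x)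
    (hjac : ∀ x y z, B (α x) (B y z) + B (α y) (B z x) + B (α z) (B x y) = 0)
    (hsurj : Function.Surjective α)
    (A C : Submodule K g)
    (hA1 : ∀ x : g, ∀ a ∈ A, B x a ∈ A) (hA2 : ∀ a ∈ A, α a ∈ A)
    (hC1 : ∀ x : g, ∀ c ∈ C, B x c ∈ C) (hC2 : ∀ c ∈ C, α c ∈ C)
    (hS : ∀ s ∈ homLieBracketSpan B A C, α s ∈ homLieBracketSpan B A C) :
    (∀ s ∈ homLieBracketSpan B A C, α s ∈ homLieBracketSpan B A C) ∧
    (∀ x : g, ∀ s ∈ homLieBracketSpan B A C, B x s ∈ homLieBracketSpan B A C) := by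
  rw [homLieBracketSpan_eq_map₂] at hS ⊢
  exact ⟨hS, fun x ↦ bracket_of_ideals_is_ideal_general hskew hjac hA1 hA2 hC1 hC2 x (hsurj x)⟩
end

section
/- Let (g, [·,·], α) be a Hom-Lie algebra over a field K and let β : g → g be a weak morphism, i.e. a linear map with β([x,y]) = [β(x), β(y)] for all x,y. Then g_β := (g, β ∘ [·,·], β ∘ α) is a Hom-Lie algebra: the bracket (x,y) ↦ β([x,y]) is bilinear and skew-symmetric and satisfies the Hom-Jacobi identity with respect to the linear map β ∘ α. -/
section HomLie

variable {R g : Type*} [CommRing R] [AddCommGroup g] [Module R g]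

/-- The cyclic sum `[α(x), [y, z]] + [α(y), [z, x]] + [α(z), [x, y]]`, whose vanishing is the
Hom-Jacobi identity. -/
def homJacobiator (B : g →ₗ[R] g →ₗ[R] g) (α : g →ₗ[R] g) (x y z : g) : g :=
  B (α x) (B y z) + B (α y) (B z x) + B (α z) (B x y)

/-- `(g, B, α)` is a Hom-Lie algebra. The bracket is an unbundled bilinear map, so that several
Hom-Lie structures can be put on the same module; as in the definition over a field, it is only
required to be skew-symmetric, which in characteristic two is weaker than alternating. -/
structure IsHomLieAlgebra (B : g →ₗ[R] g →ₗ[R] g) (α : g →ₗ[R] g) : Prop where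
  skew : ∀ x y, B x y = -B y x
  homJacobiator_eq_zero : ∀ x y z, homJacobiator B α x y z = 0

variable {B : g →ₗ[R] g →ₗ[R] g} {α β : g →ₗ[R] g}

theorem homJacobiator_twist (hβ : ∀ x y, β (B x y) = B (β x) (β y)) (x y z : g) :
    homJacobiator (B.compr₂ β) (β ∘ₗ α) x y z = β (β (homJacobiator B α x y z)) := by
  simp only [homJacobiator, LinearMap.compr₂_apply, LinearMap.comp_apply, map_add, hβ]

theorem weak_morphism_twist_general (h : IsHomLieAlgebra B α)
    (hβ : ∀ x y, β (B x y) = B (β x) (β y)) :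
    IsHomLieAlgebra (B.compr₂ β) (β ∘ₗ α) where
  skew x y := by
    rw [LinearMap.compr₂_apply, LinearMap.compr₂_apply, h.skew x y, map_neg]
  homJacobiator_eq_zero x y z := by
    rw [homJacobiator_twist hβ, h.homJacobiator_eq_zero, map_zero, map_zero]

end HomLie

/-- Twisting a Hom-Lie algebra `(g,[·,·],α)` along a weak morphism `β` yields a
Hom-Lie algebra `(g, β∘[·,·], β∘α)`. -/
theorem weak_morphism_twist {K g : Type*} [Field K] [AddCommGroup g] [Module K g]
    (B : g →ₗ[K] g →ₗ[K] g) (α : g →ₗ[K] g)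
    (hskew : ∀ x y, B x y = - B y x)
    (hjac : ∀ x y z, B (α x) (B y z) + B (α y) (B z x) + B (α z) (B x y) = 0)
    (β : g →ₗ[K] g)
    (hβ : ∀ x y, β (B x y) = B (β x) (β y)) :
    let B' : g → g → g := fun x y => β (B x y)
    let γ : g → g := fun x => β (α x)
    (∀ (a : K) (x x' y : g), B' (a • x + x') y = a • B' x y + B' x' y) ∧
    (∀ (a : K) (x y y' : g), B' x (a • y + y') = a • B' x y + B' x y') ∧
    (∀ x y, B' x y = - B' y x) ∧
    (∀ x y z, B' (γ x) (B' y z) + B' (γ y) (B' z x) + B' (γ z) (B' x y) = 0) := by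
  have twist := weak_morphism_twist_general ⟨hskew, hjac⟩ hβ
  exact ⟨by simp, by simp, twist.skew, twist.homJacobiator_eq_zero⟩
end

section
/- Let (g, [·,·], α) be a multiplicative Hom-Lie algebra over a field K and let n ≥ 0. Then the n-th derived Hom-Lie algebra g_(n) := (g, [·,·]^(n), α^(n+1)), where [x,y]^(n) := α^n([x,y]) and α^(n+1) is the (n+1)-fold composite of α, is again a multiplicative Hom-Lie algebra: the bracket [·,·]^(n) is bilinear, skew-symmetric, satisfies the Hom-Jacobi identity with respect to α^(n+1), and α^(n+1)([x,y]^(n)) = [α^(n+1)(x), α^(n+1)(y)]^(n). -/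
/-!
If `β` preserves the bracket, each term `β[βα(x), β[y, z]]` of the Hom-Jacobi identity for
`(β ∘ [·,·], β ∘ α)` equals `β²[α(x), [y, z]]`, so the cyclic sum is `β²` applied to the original
identity (Yau's twist). The `n`-th derived Hom-Lie algebra is the twist by `β = αⁿ`.
-/

section HomLie

variable {R g : Type*} [CommSemiring R] [AddCommGroup g] [Module R g]

/-- The monoid of linear endomorphisms preserving a bracket `B`. A Hom-Lie algebra is multiplicative
when its twisting map lies in this monoid. -/
def bracketEnd (B : g →ₗ[R] g →ₗ[R] g) : Submonoid (Module.End R g) where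
  carrier := {β | ∀ x y, β (B x y) = B (β x) (β y)}
  one_mem' _ _ := rfl
  mul_mem' {β γ} hβ hγ x y := by
    simp only [Module.End.mul_apply, hγ x y, hβ (γ x) (γ y)]

/-- The Hom-Lie algebra axioms for a bracket `B` and a twisting map `α`; bilinearity is part of the
type of `B`. Skew-symmetry does not force `B x x = 0` in characteristic two. -/
structure IsHomLie (B : g →ₗ[R] g →ₗ[R] g) (α : Module.End R g) : Prop where
  skew (x y : g) : B x y = -B y x
  jacobi (x y z : g) : B (α x) (B y z) + B (α y) (B z x) + B (α z) (B x y) = 0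

/-- The axioms of a multiplicative Hom-Lie algebra: the twisting map is also an endomorphism of the
bracket. -/
structure IsMultiplicativeHomLie (B : g →ₗ[R] g →ₗ[R] g) (α : Module.End R g) : Prop
    extends IsHomLie B α where
  mem_bracketEnd : α ∈ bracketEnd B

variable {B : g →ₗ[R] g →ₗ[R] g} {α β γ : Module.End R g}

theorem mem_bracketEnd_compr₂ (hγ : γ ∈ bracketEnd B) (hcomm : Commute γ β) :
    γ ∈ bracketEnd (B.compr₂ β) := fun x y ↦
  calc γ (β (B x y)) = β (γ (B x y)) := LinearMap.congr_fun hcomm.eq (B x y)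
    _ = β (B (γ x) (γ y)) := by rw [hγ x y]

theorem IsHomLie.twist (h : IsHomLie B α) (hβ : β ∈ bracketEnd B) :
    IsHomLie (B.compr₂ β) (β * α) where
  skew x y := by simp only [LinearMap.compr₂_apply, h.skew x y, map_neg]
  jacobi x y z := by
    have bracket_twist (u v w : g) :
        B.compr₂ β ((β * α) u) (B.compr₂ β v w) = β (β (B (α u) (B v w))) :=
      congrArg β (hβ (α u) (B v w)).symm
    simp only [bracket_twist, ← map_add, h.jacobi, map_zero]

theorem IsMultiplicativeHomLie.twist (h : IsMultiplicativeHomLie B α) (hβ : β ∈ bracketEnd B)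
    (hcomm : Commute β α) : IsMultiplicativeHomLie (B.compr₂ β) (β * α) where
  toIsHomLie := h.toIsHomLie.twist hβ
  mem_bracketEnd := mem_bracketEnd_compr₂ (mul_mem hβ h.mem_bracketEnd)
    ((Commute.refl β).mul_left hcomm.symm)

theorem nth_derived_homLie_general (h : IsMultiplicativeHomLie B α) (n : ℕ) :
    IsMultiplicativeHomLie (B.compr₂ (α ^ n)) (α ^ (n + 1)) :=
  pow_succ α n ▸ h.twist (pow_mem h.mem_bracketEnd n) (Commute.pow_self α n)

end HomLie

/-- The `n`-th derived Hom-Lie algebra `(g, αⁿ∘[·,·], α^{n+1})` of a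
multiplicative Hom-Lie algebra is again a multiplicative Hom-Lie algebra. -/
theorem nth_derived_homLie {K g : Type*} [Field K] [AddCommGroup g] [Module K g]
    (B : g →ₗ[K] g →ₗ[K] g) (α : g →ₗ[K] g)
    (hskew : ∀ x y, B x y = - B y x)
    (hjac : ∀ x y z, B (α x) (B y z) + B (α y) (B z x) + B (α z) (B x y) = 0)
    (hmul : ∀ x y, α (B x y) = B (α x) (α y))
    (n : ℕ) :
    let Bn : g → g → g := fun x y => (α ^ n : Module.End K g) (B x y)
    let γ : g → g := fun x => (α ^ (n + 1) : Module.End K g) x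
    (∀ (a : K) (x x' y : g), Bn (a • x + x') y = a • Bn x y + Bn x' y) ∧
    (∀ (a : K) (x y y' : g), Bn x (a • y + y') = a • Bn x y + Bn x y') ∧
    (∀ x y, Bn x y = - Bn y x) ∧
    (∀ x y z, Bn (γ x) (Bn y z) + Bn (γ y) (Bn z x) + Bn (γ z) (Bn x y) = 0) ∧
    (∀ x y, γ (Bn x y) = Bn (γ x) (γ y)) := by
  intro Bn γ
  have h := nth_derived_homLie_general ⟨⟨hskew, hjac⟩, hmul⟩ n
  exact ⟨fun a x x' y ↦ by simp [Bn], fun a x y y' ↦ by simp [Bn],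
    h.skew, h.jacobi, h.mem_bracketEnd⟩
end

section
/- Let (g, [·,·], α) be a finite-dimensional multiplicative Hom-Lie algebra of dimension n over a field K, where α is bijective and α([x,y]) = [α(x),α(y)] for all x,y. Define [x,y]' := α^{-1}([x,y]). Then [·,·]' satisfies the Jacobi identity [x,[y,z]']' + [y,[z,x]']' + [z,[x,y]']' = 0 (so (g, [·,·]') is a Lie algebra), and its descending central series coincides with that of [·,·]; in particular, if (g, [·,·], α) is filiform then (g, [·,·]') is a filiform Lie algebra. -/
/-- The descending central series of a bracket. -/
def homLieLCS {K g : Type*} [Field K] [AddCommGroup g] [Module K g]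
    (B : g →ₗ[K] g →ₗ[K] g) : ℕ → Submodule K g
  | 0 => ⊤
  | r + 1 => homLieBracketSpan B ⊤ (homLieLCS B r)

/-!
Since `α` is an automorphism of `B`, so is `β = α⁻¹`. Moving `β` out of the brackets turns
`[x, [y, z]']'` into `β² [α x, [y, z]]`, so the Jacobi identity for `[·,·]'` is the image under `β²`
of the Hom-Jacobi identity. A surjective endomorphism maps each term of the descending central
series onto itself, so the extra `β` in `[·,·]' = β ∘ [·,·]` does not change the series.
-/

namespace UntwistFiliform

variable {R M N : Type*} [CommSemiring R] [AddCommMonoid M] [AddCommMonoid N]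
  [Module R M] [Module R N]

/-- The descending central series of a bilinear bracket over a commutative semiring; it extends
`homLieLCS` beyond vector spaces, with the span of brackets expressed by `Submodule.map₂`. -/
def descendingCentralSeries (B : M →ₗ[R] M →ₗ[R] M) : ℕ → Submodule R M
  | 0 => ⊤
  | p + 1 => Submodule.map₂ B ⊤ (descendingCentralSeries B p)

theorem map_map₂_eq_map₂_map_map {M₁ M₂ M₃ N₁ N₂ N₃ : Type*}
    [AddCommMonoid M₁] [AddCommMonoid M₂] [AddCommMonoid M₃]
    [AddCommMonoid N₁] [AddCommMonoid N₂] [AddCommMonoid N₃]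
    [Module R M₁] [Module R M₂] [Module R M₃] [Module R N₁] [Module R N₂] [Module R N₃]
    {B : M₁ →ₗ[R] M₂ →ₗ[R] M₃} {C : N₁ →ₗ[R] N₂ →ₗ[R] N₃}
    {f₁ : M₁ →ₗ[R] N₁} {f₂ : M₂ →ₗ[R] N₂} {f₃ : M₃ →ₗ[R] N₃}
    (hf : ∀ x y, f₃ (B x y) = C (f₁ x) (f₂ y)) (P : Submodule R M₁) (Q : Submodule R M₂) :
    (Submodule.map₂ B P Q).map f₃ = Submodule.map₂ C (P.map f₁) (Q.map f₂) := by
  have hcomp : B.compr₂ f₃ = C.compl₁₂ f₁ f₂ := LinearMap.ext₂ hf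
  rw [Submodule.map_map₂, hcomp, Submodule.map₂_map_map]

theorem map_descendingCentralSeries {B : M →ₗ[R] M →ₗ[R] M} {C : N →ₗ[R] N →ₗ[R] N}
    {f : M →ₗ[R] N} (hf : ∀ x y, f (B x y) = C (f x) (f y)) (hsurj : Function.Surjective f)
    (p : ℕ) : (descendingCentralSeries B p).map f = descendingCentralSeries C p := by
  have htop : (⊤ : Submodule R M).map f = ⊤ := by
    rw [Submodule.map_top, LinearMap.range_eq_top.2 hsurj]
  induction p with
  | zero => exact htop
  | succ p ih =>
    simp only [descendingCentralSeries, map_map₂_eq_map₂_map_map hf, htop, ih]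

theorem descendingCentralSeries_compr₂ {B : M →ₗ[R] M →ₗ[R] M} {f : M →ₗ[R] M}
    (hf : ∀ x y, f (B x y) = B (f x) (f y)) (hsurj : Function.Surjective f) (p : ℕ) :
    descendingCentralSeries (B.compr₂ f) p = descendingCentralSeries B p := by
  induction p with
  | zero => rfl
  | succ p ih =>
    calc Submodule.map₂ (B.compr₂ f) ⊤ (descendingCentralSeries (B.compr₂ f) p)
        = (descendingCentralSeries B (p + 1)).map f := by
          rw [ih, ← Submodule.map_map₂, descendingCentralSeries]
      _ = descendingCentralSeries B (p + 1) := map_descendingCentralSeries hf hsurj (p + 1)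

theorem symm_apply_bracket {B : M →ₗ[R] M →ₗ[R] M} {α : M ≃ₗ[R] M}
    (hmul : ∀ x y, α (B x y) = B (α x) (α y)) (x y : M) :
    α.symm (B x y) = B (α.symm x) (α.symm y) := by
  rw [LinearEquiv.symm_apply_eq, hmul, α.apply_symm_apply, α.apply_symm_apply]

theorem jacobi_compr₂_symm {B : M →ₗ[R] M →ₗ[R] M} {α : M ≃ₗ[R] M}
    (hjac : ∀ x y z, B (α x) (B y z) + B (α y) (B z x) + B (α z) (B x y) = 0)
    (hmul : ∀ x y, α (B x y) = B (α x) (α y)) (x y z : M) :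
    let B' := B.compr₂ α.symm.toLinearMap
    B' x (B' y z) + B' y (B' z x) + B' z (B' x y) = 0 := by
  intro B'
  have htwist (u v w : M) : B' u (B' v w) = α.symm (α.symm (B (α u) (B v w))) := by
    change α.symm (B u (α.symm (B v w))) = _
    rw [symm_apply_bracket hmul (α u), α.symm_apply_apply]
  simp only [htwist, ← map_add, hjac, map_zero]

theorem homLieBracketSpan_eq_map₂ {K g : Type*} [Field K] [AddCommGroup g] [Module K g]
    (B : g →ₗ[K] g →ₗ[K] g) (A C : Submodule K g) :
    homLieBracketSpan B A C = Submodule.map₂ B A C := by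
  simp only [homLieBracketSpan, Submodule.map₂_eq_span_image2, Set.image2, SetLike.mem_coe,
    eq_comm]

theorem homLieLCS_eq_descendingCentralSeries {K g : Type*} [Field K] [AddCommGroup g]
    [Module K g] (B : g →ₗ[K] g →ₗ[K] g) (p : ℕ) :
    homLieLCS B p = descendingCentralSeries B p := by
  induction p with
  | zero => rfl
  | succ p ih => rw [homLieLCS, homLieBracketSpan_eq_map₂, ih, descendingCentralSeries]

end UntwistFiliform

open UntwistFiliform

theorem untwist_filiform_general {R M : Type*} [CommSemiring R] [AddCommMonoid M] [Module R M]
    (B : M →ₗ[R] M →ₗ[R] M) (α : M ≃ₗ[R] M)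
    (hjac : ∀ x y z, B (α x) (B y z) + B (α y) (B z x) + B (α z) (B x y) = 0)
    (hmul : ∀ x y, α (B x y) = B (α x) (α y)) :
    let B' : M →ₗ[R] M →ₗ[R] M := B.compr₂ α.symm.toLinearMap
    (∀ x y z, B' x (B' y z) + B' y (B' z x) + B' z (B' x y) = 0) ∧
    ∀ p : ℕ, descendingCentralSeries B' p = descendingCentralSeries B p :=
  ⟨jacobi_compr₂_symm hjac hmul,
    descendingCentralSeries_compr₂ (symm_apply_bracket hmul) α.symm.surjective⟩

/-- Untwisting a multiplicative Hom-Lie algebra with bijective structure map by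
`[x,y]' := α⁻¹([x,y])` yields a Lie algebra with the same descending central
series; in particular, filiform Hom-Lie algebras untwist to filiform Lie
algebras. -/
theorem untwist_filiform {K g : Type*} [Field K] [AddCommGroup g] [Module K g]
    [FiniteDimensional K g] (n : ℕ) (hn : Module.finrank K g = n)
    (B : g →ₗ[K] g →ₗ[K] g) (α : g ≃ₗ[K] g)
    (hskew : ∀ x y, B x y = - B y x)
    (hjac : ∀ x y z, B (α x) (B y z) + B (α y) (B z x) + B (α z) (B x y) = 0)
    (hmul : ∀ x y, α (B x y) = B (α x) (α y)) :
    let B' : g →ₗ[K] g →ₗ[K] g := B.compr₂ α.symm.toLinearMap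
    (∀ x y z, B' x (B' y z) + B' y (B' z x) + B' z (B' x y) = 0) ∧
    (∀ p : ℕ, homLieLCS B' p = homLieLCS B p) ∧
    ((∀ k : ℕ, 1 ≤ k → k ≤ n - 1 →
        Module.finrank K (homLieLCS B k) = n - k - 1) →
      ∀ k : ℕ, 1 ≤ k → k ≤ n - 1 →
        Module.finrank K (homLieLCS B' k) = n - k - 1) := by
  obtain ⟨hjac', hlcs⟩ := untwist_filiform_general B α hjac hmul
  simp only [← homLieLCS_eq_descendingCentralSeries] at hlcs
  exact ⟨hjac', hlcs, fun hfil k hk hkn => (hlcs k).symm ▸ hfil k hk hkn⟩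
end

section
/- Let K be a field of characteristic zero and q ∈ K. On the 3-dimensional K-vector space with basis x₁, x₂, x₃, define the skew-symmetric bilinear bracket by [x₁,x₂] = −2q x₂, [x₁,x₃] = 2x₃, [x₂,x₃] = −(1/2)(1+q) x₁ (other brackets determined by skew-symmetry, [xᵢ,xᵢ] = 0), and the linear map α by α(x₁) = q x₁, α(x₂) = q² x₂, α(x₃) = q x₃. Then (K³, [·,·], α) is a Hom-Lie algebra: the Hom-Jacobi identity [α(x),[y,z]] + [α(y),[z,x]] + [α(z),[x,y]] = 0 holds for all x, y, z. -/
/-!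
Every alternating bracket on `R³` has the form `[u, v] = T (u ⨯₃ v)` for a matrix `T`. For a twist
`α = A`, the Hom-Jacobi sum is `T` applied to `A x ⨯₃ T (y ⨯₃ z) + (cyclic)`. A cross product
`u ⨯₃ v` only depends on the antisymmetric part of the matrix `u vᵀ`, so the latter sum only
depends on the antisymmetric part of `A (x (y ⨯₃ z)ᵀ + y (z ⨯₃ x)ᵀ + z (x ⨯₃ y)ᵀ) Tᵀ`. By Cramer's
rule this matrix is `det (x, y, z) A Tᵀ`, and so the Hom-Jacobi identity holds as soon as `A Tᵀ` is
symmetric. For the `q`-deformed `sl₂`, the only off-diagonal entries of `A Tᵀ` are `q² * (-2)` and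
`q * (-2 q)`, which agree and sit in transposed positions.
-/

open Matrix

section CrossProduct

variable {R : Type*} [CommRing R]

/-- The axial vector of a `3 × 3` matrix: the coordinates of its antisymmetric part, normalised so
that the axial vector of `u vᵀ` is `u ⨯₃ v`. -/
def axialVector : Matrix (Fin 3) (Fin 3) R →ₗ[R] Fin 3 → R where
  toFun M := ![M 1 2 - M 2 1, M 2 0 - M 0 2, M 0 1 - M 1 0]
  map_add' M N := by
    ext i
    fin_cases i <;> simp <;> ring
  map_smul' r M := by
    ext i
    fin_cases i <;> simp [mul_sub]

theorem axialVector_apply (M : Matrix (Fin 3) (Fin 3) R) :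
    axialVector M = ![M 1 2 - M 2 1, M 2 0 - M 0 2, M 0 1 - M 1 0] :=
  rfl

theorem axialVector_vecMulVec (u v : Fin 3 → R) : axialVector (vecMulVec u v) = u ⨯₃ v := by
  simp only [axialVector_apply, cross_apply, vecMulVec_apply, mul_comm]

theorem axialVector_eq_zero_of_isSymm {M : Matrix (Fin 3) (Fin 3) R} (hM : M.IsSymm) :
    axialVector M = 0 := by
  simp [axialVector_apply, hM.apply 1 2, hM.apply 0 2, hM.apply 0 1]

theorem vecMulVec_cross_cyclic_sum (x y z : Fin 3 → R) :
    vecMulVec x (y ⨯₃ z) + vecMulVec y (z ⨯₃ x) + vecMulVec z (x ⨯₃ y) =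
      (x ⬝ᵥ y ⨯₃ z) • (1 : Matrix (Fin 3) (Fin 3) R) := by
  ext i j
  fin_cases i <;> fin_cases j <;>
    simp [cross_apply, dotProduct, Fin.sum_univ_three] <;> ring

theorem mulVec_cross_mulVec_cross_cyclic_sum (A T : Matrix (Fin 3) (Fin 3) R) (x y z : Fin 3 → R) :
    (A *ᵥ x) ⨯₃ (T *ᵥ (y ⨯₃ z)) + (A *ᵥ y) ⨯₃ (T *ᵥ (z ⨯₃ x)) + (A *ᵥ z) ⨯₃ (T *ᵥ (x ⨯₃ y)) =
      (x ⬝ᵥ y ⨯₃ z) • axialVector (A * Tᵀ) := by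
  have cross_eq (u v : Fin 3 → R) :
      (A *ᵥ u) ⨯₃ (T *ᵥ v) = axialVector (A * vecMulVec u v * Tᵀ) := by
    rw [mul_vecMulVec, vecMulVec_mul, vecMul_transpose, axialVector_vecMulVec]
  rw [cross_eq, cross_eq, cross_eq, ← map_add, ← map_add, ← add_mul, ← add_mul, ← mul_add,
    ← mul_add, vecMulVec_cross_cyclic_sum, mul_smul_one, smul_mul, map_smul]

theorem q_deformed_sl2_homLie_general {A T : Matrix (Fin 3) (Fin 3) R} (h : (A * Tᵀ).IsSymm)
    (x y z : Fin 3 → R) :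
    T *ᵥ ((A *ᵥ x) ⨯₃ (T *ᵥ (y ⨯₃ z))) + T *ᵥ ((A *ᵥ y) ⨯₃ (T *ᵥ (z ⨯₃ x))) +
      T *ᵥ ((A *ᵥ z) ⨯₃ (T *ᵥ (x ⨯₃ y))) = 0 := by
  rw [← mulVec_add, ← mulVec_add, mulVec_cross_mulVec_cross_cyclic_sum,
    axialVector_eq_zero_of_isSymm h, smul_zero, mulVec_zero]

end CrossProduct

section DeformedSl2

variable {R : Type*} [CommRing R]

/-- The matrix `T` for which `T (u ⨯₃ v)` is the bracket `[x₁, x₂] = -2q x₂`, `[x₁, x₃] = 2 x₃`,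
`[x₂, x₃] = c x₁`. The `q`-deformed `sl₂` is the case `c = -(1 + q) / 2`; a free `c` avoids the
division. -/
def deformedSl2BracketMatrix (c q : R) : Matrix (Fin 3) (Fin 3) R :=
  !![c, 0, 0; 0, 0, -2 * q; 0, -2, 0]

/-- The matrix of the twisting map `α` of the `q`-deformed `sl₂`. -/
def deformedSl2TwistMatrix (q : R) : Matrix (Fin 3) (Fin 3) R :=
  diagonal ![q, q ^ 2, q]

theorem deformedSl2BracketMatrix_mulVec_cross (c q : R) (u v : Fin 3 → R) :
    deformedSl2BracketMatrix c q *ᵥ (u ⨯₃ v) =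
      ![c * (u 1 * v 2 - u 2 * v 1), -2 * q * (u 0 * v 1 - u 1 * v 0),
        2 * (u 0 * v 2 - u 2 * v 0)] := by
  ext i
  fin_cases i <;> simp [deformedSl2BracketMatrix, cross_apply] <;> ring

theorem deformedSl2TwistMatrix_mulVec (q : R) (u : Fin 3 → R) :
    deformedSl2TwistMatrix q *ᵥ u = ![q * u 0, q ^ 2 * u 1, q * u 2] := by
  ext i
  fin_cases i <;> simp [deformedSl2TwistMatrix, mulVec_diagonal]

theorem isSymm_deformedSl2TwistMatrix_mul_transpose (c q : R) :
    (deformedSl2TwistMatrix q * (deformedSl2BracketMatrix c q)ᵀ).IsSymm := by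
  ext i j
  fin_cases i <;> fin_cases j <;>
    simp [deformedSl2TwistMatrix, deformedSl2BracketMatrix, diagonal_mul] <;> ring

end DeformedSl2

/-- The q-deformation of sl₂(K) is a Hom-Lie algebra. -/
theorem q_deformed_sl2_homLie {K : Type*} [Field K] [CharZero K] (q : K) :
    let br : (Fin 3 → K) → (Fin 3 → K) → (Fin 3 → K) := fun u v =>
      ![-(1/2) * (1 + q) * (u 1 * v 2 - u 2 * v 1),
        -2 * q * (u 0 * v 1 - u 1 * v 0),
        2 * (u 0 * v 2 - u 2 * v 0)]
    let α : (Fin 3 → K) → (Fin 3 → K) := fun u =>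
      ![q * u 0, q ^ 2 * u 1, q * u 2]
    ∀ x y z : Fin 3 → K,
      br (α x) (br y z) + br (α y) (br z x) + br (α z) (br x y) = 0 := by
  simpa only [deformedSl2BracketMatrix_mulVec_cross, deformedSl2TwistMatrix_mulVec] using
    q_deformed_sl2_homLie_general
      (isSymm_deformedSl2TwistMatrix_mul_transpose (-(1/2) * (1 + q)) q)
end

section
/- Let K be a field and a₁₁, a₁₂, a₂₁, a₂₂, a₃₁, a₃₂ ∈ K. On the 3-dimensional K-vector space with basis x₁, x₂, x₃, define the skew-symmetric bilinear bracket by [x₁,x₂] = (a₁₁a₂₂ − a₁₂a₂₁) x₃ and [x₁,x₃] = [x₂,x₃] = 0 (other brackets by skew-symmetry), and define the linear map α by α(x₁) = a₁₁x₁ + a₂₁x₂ + a₃₁x₃, α(x₂) = a₁₂x₁ + a₂₂x₂ + a₃₂x₃, α(x₃) = (a₁₁a₂₂ − a₁₂a₂₁) x₃. Then (K³, [·,·], α) is a multiplicative Hom-Lie algebra: the Hom-Jacobi identity holds for all triples and α([x,y]) = [α(x), α(y)] for all x, y. -/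
/-!
The map `α` is an endomorphism of the Heisenberg Lie algebra, in which `[x₁, x₂] = x₃` is central:
modulo the centre it is the matrix `(aᵢⱼ)`, so it must act on `x₃` by the determinant. The bracket
of the theorem is the Heisenberg bracket followed by `α`, its *Yau twist*. Twisting a Lie bracket
by an endomorphism `φ` gives a multiplicative Hom-Lie algebra, because each term of the Hom-Jacobi
sum is `φ²` applied to the corresponding term of the Jacobi sum.
-/

section HomLie

variable {R : Type*} [CommRing R]

/-- Multiplicative Hom-Lie algebras, as a property of a bilinear bracket `b` and a linear twisting
map `α`. The bracket is skew-symmetric rather than alternating, a weaker condition in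
characteristic two. -/
structure IsMultiplicativeHomLie_s18 {L : Type*} [AddCommGroup L] [Module R L]
    (b : L →ₗ[R] L →ₗ[R] L) (α : L →ₗ[R] L) : Prop where
  skew : ∀ x y, b x y = -b y x
  hom_jacobi : ∀ x y z, b (α x) (b y z) + b (α y) (b z x) + b (α z) (b x y) = 0
  map_bracket : ∀ x y, α (b x y) = b (α x) (α y)

theorem IsMultiplicativeHomLie_s18.yauTwist {L : Type*} [AddCommGroup L] [Module R L]
    {b : L →ₗ[R] L →ₗ[R] L} {α φ : L →ₗ[R] L} (h : IsMultiplicativeHomLie_s18 b α)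
    (map_bracket : ∀ x y, φ (b x y) = b (φ x) (φ y)) (comm : ∀ x, φ (α x) = α (φ x)) :
    IsMultiplicativeHomLie_s18 (b.compr₂ φ) (φ ∘ₗ α) where
  skew x y := by
    rw [LinearMap.compr₂_apply, LinearMap.compr₂_apply, ← map_neg, ← h.skew]
  hom_jacobi x y z := by
    have twist_twist (u v w : L) :
        b.compr₂ φ ((φ ∘ₗ α) u) (b.compr₂ φ v w) = φ (φ (b (α u) (b v w))) := by
      simp only [LinearMap.compr₂_apply, LinearMap.comp_apply, map_bracket]
    simp only [twist_twist, ← map_add, h.hom_jacobi, map_zero]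
  map_bracket x y := by
    simp only [LinearMap.compr₂_apply, LinearMap.comp_apply, map_bracket, comm, h.map_bracket]

/-- The bracket of the Heisenberg Lie algebra on `R³`, whose only nonzero bracket of basis vectors
`xᵢ`, `xⱼ` with `i < j` is `[x₁, x₂] = x₃`; coordinates are numbered from `0`. -/
def heisenbergBracket : (Fin 3 → R) →ₗ[R] (Fin 3 → R) →ₗ[R] (Fin 3 → R) :=
  LinearMap.mk₂ R (fun u v => ![0, 0, u 0 * v 1 - u 1 * v 0])
    (fun u u' v => by simp [add_mul, add_sub_add_comm])
    (fun r u v => by simp [mul_sub, mul_assoc])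
    (fun u v v' => by simp [mul_add, add_sub_add_comm])
    (fun r u v => by simp [mul_sub, mul_left_comm])

theorem heisenbergBracket_apply (u v : Fin 3 → R) :
    heisenbergBracket u v = ![0, 0, u 0 * v 1 - u 1 * v 0] :=
  rfl

theorem heisenbergBracket_heisenbergBracket (u v w : Fin 3 → R) :
    heisenbergBracket u (heisenbergBracket v w) = 0 := by
  simp [heisenbergBracket_apply]

theorem isMultiplicativeHomLie_heisenbergBracket :
    IsMultiplicativeHomLie_s18 (heisenbergBracket (R := R)) LinearMap.id where
  skew u v := by simp [heisenbergBracket_apply, mul_comm]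
  hom_jacobi u v w := by simp [heisenbergBracket_heisenbergBracket]
  map_bracket _ _ := rfl

/-- The endomorphism of the Heisenberg Lie algebra that induces `M` on the quotient by the span
of `x₃` and whose remaining free entries, the `x₃`-coordinates of the images of `x₁` and `x₂`,
are given by `c`. -/
def heisenbergEnd (M : Matrix (Fin 2) (Fin 2) R) (c : Fin 2 → R) :
    (Fin 3 → R) →ₗ[R] (Fin 3 → R) :=
  Matrix.mulVecLin
    !![M 0 0, M 0 1, 0;
       M 1 0, M 1 1, 0;
       c 0,   c 1,   M.det]

theorem heisenbergEnd_apply (M : Matrix (Fin 2) (Fin 2) R) (c : Fin 2 → R) (u : Fin 3 → R) :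
    heisenbergEnd M c u =
      ![M 0 0 * u 0 + M 0 1 * u 1,
        M 1 0 * u 0 + M 1 1 * u 1,
        c 0 * u 0 + c 1 * u 1 + M.det * u 2] := by
  ext i
  fin_cases i <;> simp [heisenbergEnd, Matrix.mulVec_eq_sum, Fin.sum_univ_three, mul_comm]

theorem heisenbergEnd_heisenbergBracket (M : Matrix (Fin 2) (Fin 2) R) (c : Fin 2 → R)
    (u v : Fin 3 → R) :
    heisenbergEnd M c (heisenbergBracket u v) = M.det • heisenbergBracket u v := by
  simp [heisenbergEnd_apply, heisenbergBracket_apply]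

theorem heisenbergBracket_heisenbergEnd (M : Matrix (Fin 2) (Fin 2) R) (c : Fin 2 → R)
    (u v : Fin 3 → R) :
    heisenbergBracket (heisenbergEnd M c u) (heisenbergEnd M c v) =
      M.det • heisenbergBracket u v := by
  have det_mul_det :
      (M 0 0 * u 0 + M 0 1 * u 1) * (M 1 0 * v 0 + M 1 1 * v 1) -
          (M 1 0 * u 0 + M 1 1 * u 1) * (M 0 0 * v 0 + M 0 1 * v 1) =
        M.det * (u 0 * v 1 - u 1 * v 0) := by
    rw [Matrix.det_fin_two]
    ring
  simp [heisenbergEnd_apply, heisenbergBracket_apply, det_mul_det]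

theorem isMultiplicativeHomLie_twistedHeisenberg (M : Matrix (Fin 2) (Fin 2) R)
    (c : Fin 2 → R) :
    IsMultiplicativeHomLie_s18 (M.det • heisenbergBracket) (heisenbergEnd M c) := by
  have twist_eq : heisenbergBracket.compr₂ (heisenbergEnd M c) = M.det • heisenbergBracket :=
    LinearMap.ext₂ (heisenbergEnd_heisenbergBracket M c)
  rw [← twist_eq]
  exact isMultiplicativeHomLie_heisenbergBracket.yauTwist
    (fun u v => by rw [heisenbergEnd_heisenbergBracket, heisenbergBracket_heisenbergEnd])
    (fun _ => rfl)

end HomLie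

theorem twisted_heisenberg_homLie_general {R : Type*} [CommRing R]
    (a11 a12 a21 a22 a31 a32 : R) :
    let br : (Fin 3 → R) → (Fin 3 → R) → (Fin 3 → R) := fun u v =>
      ![0, 0, (a11 * a22 - a12 * a21) * (u 0 * v 1 - u 1 * v 0)]
    let α : (Fin 3 → R) → (Fin 3 → R) := fun u =>
      ![a11 * u 0 + a12 * u 1,
        a21 * u 0 + a22 * u 1,
        a31 * u 0 + a32 * u 1 + (a11 * a22 - a12 * a21) * u 2]
    (∀ x y z : Fin 3 → R,
      br (α x) (br y z) + br (α y) (br z x) + br (α z) (br x y) = 0) ∧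
    (∀ x y : Fin 3 → R, α (br x y) = br (α x) (α y)) := by
  intro br α
  let A : Matrix (Fin 2) (Fin 2) R := !![a11, a12; a21, a22]
  have br_eq : br = fun u v => (A.det • heisenbergBracket) u v := by
    funext u v
    simp [br, A, heisenbergBracket_apply]
  have α_eq : α = heisenbergEnd A ![a31, a32] := by
    funext u
    simp [α, A, heisenbergEnd_apply]
  have homLie := isMultiplicativeHomLie_twistedHeisenberg A ![a31, a32]
  rw [br_eq, α_eq]
  exact ⟨homLie.hom_jacobi, homLie.map_bracket⟩

/-- The twisted Heisenberg algebra is a multiplicative Hom-Lie algebra. -/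
theorem twisted_heisenberg_homLie {K : Type*} [Field K]
    (a11 a12 a21 a22 a31 a32 : K) :
    let br : (Fin 3 → K) → (Fin 3 → K) → (Fin 3 → K) := fun u v =>
      ![0, 0, (a11 * a22 - a12 * a21) * (u 0 * v 1 - u 1 * v 0)]
    let α : (Fin 3 → K) → (Fin 3 → K) := fun u =>
      ![a11 * u 0 + a12 * u 1,
        a21 * u 0 + a22 * u 1,
        a31 * u 0 + a32 * u 1 + (a11 * a22 - a12 * a21) * u 2]
    (∀ x y z : Fin 3 → K,
      br (α x) (br y z) + br (α y) (br z x) + br (α z) (br x y) = 0) ∧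
    (∀ x y : Fin 3 → K, α (br x y) = br (α x) (α y)) :=
  twisted_heisenberg_homLie_general a11 a12 a21 a22 a31 a32
end

section
/- Let K be a field, n ≥ 2, and let Lₙ be the (n+1)-dimensional K-vector space with basis x₀, x₁, …, xₙ equipped with the skew-symmetric bilinear bracket given by [x₀, xᵢ] = x_{i+1} for 1 ≤ i ≤ n−1 and [xᵢ, xⱼ] = 0 for all i, j ≥ 1 (other brackets determined by skew-symmetry). For arbitrary scalars ρ_{i,0}, ρ_{i,1} ∈ K (1 ≤ i ≤ n), define the linear map α by α(x₀) = Σ_{i=1}^{n} ρ_{i,0} xᵢ, α(x₁) = Σ_{i=1}^{n} ρ_{i,1} xᵢ, and α(x_k) = 0 for 2 ≤ k ≤ n. Then (Lₙ, [·,·], α) is a multiplicative Hom-Lie algebra: the Hom-Jacobi identity holds for all triples and α([x,y]) = [α(x), α(y)] for all x, y. -/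
/-!
Write a bracket in the form `[u, v] = φ u • D v - φ v • D u` with `φ` a linear form and `D` an
endomorphism. Then `ker φ` is abelian, and it contains every bracket as soon as `φ ∘ D = 0`. If
moreover `α` takes values in `ker φ` and kills `range D`, then each term of the Hom-Jacobi identity
and both sides of `α [u, v] = [α u, α v]` vanish separately. For `Lₙ`, `φ` is the coordinate along
`x₀` and `D = ad x₀`.
-/

section HomLie

variable {R V : Type*} [CommRing R] [AddCommGroup V] [Module R V]

/-- The bilinear bracket `br` and the twisting map `α` form a Hom-Lie algebra. It is a predicate on
the pair `(br, α)`, so that different twists of one bracket can be compared. -/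
structure IsHomLie_s19 (br : V →ₗ[R] V →ₗ[R] V) (α : V →ₗ[R] V) : Prop where
  skew (x y : V) : br x y = -br y x
  hom_jacobi (x y z : V) : br (α x) (br y z) + br (α y) (br z x) + br (α z) (br x y) = 0

/-- A Hom-Lie algebra is multiplicative when its twisting map preserves the bracket. -/
structure IsMultiplicativeHomLie_s19 (br : V →ₗ[R] V →ₗ[R] V) (α : V →ₗ[R] V) : Prop
    extends IsHomLie_s19 br α where
  map_bracket (x y : V) : α (br x y) = br (α x) (α y)

/-- The almost abelian bracket `[u, v] = φ u • D v - φ v • D u`, for which `ker φ` is abelian.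
If `φ e = 1` and `D e = 0`, then `D = ad e`. -/
def almostAbelianBracket (φ : V →ₗ[R] R) (D : V →ₗ[R] V) : V →ₗ[R] V →ₗ[R] V :=
  φ.smulRight D - (φ.smulRight D).flip

theorem almostAbelianBracket_apply (φ : V →ₗ[R] R) (D : V →ₗ[R] V) (u v : V) :
    almostAbelianBracket φ D u v = φ u • D v - φ v • D u :=
  rfl

theorem almostAbelianBracket_eq_zero {φ : V →ₗ[R] R} (D : V →ₗ[R] V) {u v : V}
    (hu : φ u = 0) (hv : φ v = 0) : almostAbelianBracket φ D u v = 0 := by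
  simp [almostAbelianBracket_apply, hu, hv]

theorem map_almostAbelianBracket_eq_zero {W : Type*} [AddCommGroup W] [Module R W]
    (φ : V →ₗ[R] R) {D : V →ₗ[R] V} {f : V →ₗ[R] W} (hfD : ∀ v, f (D v) = 0) (u v : V) :
    f (almostAbelianBracket φ D u v) = 0 := by
  simp [almostAbelianBracket_apply, hfD]

theorem isMultiplicativeHomLie_almostAbelianBracket {φ : V →ₗ[R] R} {D α : V →ₗ[R] V}
    (hφD : ∀ v, φ (D v) = 0) (hφα : ∀ v, φ (α v) = 0) (hαD : ∀ v, α (D v) = 0) :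
    IsMultiplicativeHomLie_s19 (almostAbelianBracket φ D) α where
  skew x y := by simp only [almostAbelianBracket_apply, neg_sub]
  hom_jacobi x y z := by
    have term_eq_zero (a b c : V) :
        almostAbelianBracket φ D (α a) (almostAbelianBracket φ D b c) = 0 :=
      almostAbelianBracket_eq_zero D (hφα a) (map_almostAbelianBracket_eq_zero φ hφD b c)
    simp only [term_eq_zero, add_zero]
  map_bracket x y := by
    rw [map_almostAbelianBracket_eq_zero φ hαD,
      almostAbelianBracket_eq_zero D (hφα x) (hφα y)]

end HomLie

section ModelFiliform

variable {R : Type*} [CommRing R] {n : ℕ}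

variable (R n) in
/-- The derivation `ad x₀` of the model filiform algebra `Lₙ` in coordinates: it sends `xᵢ` to
`xᵢ₊₁` for `1 ≤ i < n` and kills `x₀` and `xₙ`. -/
def filiformShift : (Fin (n + 1) → R) →ₗ[R] Fin (n + 1) → R :=
  LinearMap.pi fun j =>
    if 2 ≤ (j : ℕ) then LinearMap.proj ⟨(j : ℕ) - 1, (Nat.sub_le _ _).trans_lt j.isLt⟩ else 0

theorem filiformShift_apply_of_lt (v : Fin (n + 1) → R) {j : Fin (n + 1)} (hj : (j : ℕ) < 2) :
    filiformShift R n v j = 0 := by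
  simp [filiformShift, hj.not_ge]

variable (R n) in
/-- The bracket of the model filiform algebra `Lₙ` on coordinate vectors with respect to
`x₀, …, xₙ`. -/
def filiformBracket :
    (Fin (n + 1) → R) →ₗ[R] (Fin (n + 1) → R) →ₗ[R] Fin (n + 1) → R :=
  almostAbelianBracket (LinearMap.proj 0) (filiformShift R n)

theorem filiformBracket_apply (u v : Fin (n + 1) → R) (j : Fin (n + 1)) :
    filiformBracket R n u v j =
      if 2 ≤ (j : ℕ) then
        u 0 * v ⟨(j : ℕ) - 1, (Nat.sub_le _ _).trans_lt j.isLt⟩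
          - u ⟨(j : ℕ) - 1, (Nat.sub_le _ _).trans_lt j.isLt⟩ * v 0
      else 0 := by
  split_ifs with hj <;>
    simp [filiformBracket, almostAbelianBracket_apply, filiformShift, hj, mul_comm (v 0)]

/-- The twisting map of `Lₙ` with `α x₀ = ∑ ρ0 i • xᵢ`, `α x₁ = ∑ ρ1 i • xᵢ`, both sums over
`1 ≤ i ≤ n`, and `α xₖ = 0` for `2 ≤ k`. The entries `ρ0 0` and `ρ1 0` are ignored. -/
def filiformTwist (ρ0 ρ1 : Fin (n + 1) → R) : (Fin (n + 1) → R) →ₗ[R] Fin (n + 1) → R :=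
  LinearMap.pi fun j =>
    if 1 ≤ (j : ℕ) then ρ0 j • LinearMap.proj 0 + ρ1 j • LinearMap.proj 1 else 0

theorem filiformTwist_apply (ρ0 ρ1 u : Fin (n + 1) → R) (j : Fin (n + 1)) :
    filiformTwist ρ0 ρ1 u j = if 1 ≤ (j : ℕ) then ρ0 j * u 0 + ρ1 j * u 1 else 0 := by
  split_ifs with hj <;> simp [filiformTwist, hj]

theorem filiformTwist_filiformShift (ρ0 ρ1 v : Fin (n + 1) → R) :
    filiformTwist ρ0 ρ1 (filiformShift R n v) = 0 := by
  have h_zero : filiformShift R n v 0 = 0 := filiformShift_apply_of_lt v (by simp)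
  have h_one : filiformShift R n v 1 = 0 :=
    filiformShift_apply_of_lt v (Nat.lt_succ_of_le (Nat.mod_le 1 (n + 1)))
  ext j
  simp [filiformTwist_apply, h_zero, h_one]

theorem model_filiform_multiplicative_general (ρ0 ρ1 : Fin (n + 1) → R) :
    IsMultiplicativeHomLie_s19 (filiformBracket R n) (filiformTwist ρ0 ρ1) :=
  isMultiplicativeHomLie_almostAbelianBracket
    (fun v => filiformShift_apply_of_lt v (j := 0) (by simp))
    (fun v => by simp [filiformTwist_apply])
    (filiformTwist_filiformShift ρ0 ρ1)

end ModelFiliform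

/-- The model filiform algebra `Lₙ` with the structure maps of the family
`ρ₀₀ = 0` is a multiplicative Hom-Lie algebra. -/
theorem model_filiform_multiplicative {K : Type*} [Field K] (n : ℕ) (hn : 2 ≤ n)
    (ρ0 ρ1 : Fin (n + 1) → K) :
    let br : (Fin (n + 1) → K) → (Fin (n + 1) → K) → (Fin (n + 1) → K) := fun u v j =>
      if h : 2 ≤ (j : ℕ) then
        u 0 * v ⟨(j : ℕ) - 1, lt_of_le_of_lt (Nat.sub_le _ _) j.isLt⟩
        - u ⟨(j : ℕ) - 1, lt_of_le_of_lt (Nat.sub_le _ _) j.isLt⟩ * v 0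
      else 0
    let α : (Fin (n + 1) → K) → (Fin (n + 1) → K) := fun u j =>
      if 1 ≤ (j : ℕ) then ρ0 j * u 0 + ρ1 j * u 1 else 0
    (∀ x y z : Fin (n + 1) → K,
      br (α x) (br y z) + br (α y) (br z x) + br (α z) (br x y) = 0) ∧
    (∀ x y : Fin (n + 1) → K, α (br x y) = br (α x) (α y)) := by
  intro br α
  have hbr (u v) : filiformBracket K n u v = br u v := funext (filiformBracket_apply u v)
  have hα (u) : filiformTwist ρ0 ρ1 u = α u := funext (filiformTwist_apply ρ0 ρ1 u)
  have h := model_filiform_multiplicative_general ρ0 ρ1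
  exact ⟨by simpa only [hbr, hα] using h.hom_jacobi, by simpa only [hbr, hα] using h.map_bracket⟩
end
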